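/- Let n, m ≥ 1, let A ∈ M_n(ℝ), and let P, Q ∈ M_n(ℝ) be symmetric positive definite matrices such that AᵀP + PA + Q is negative semidefinite. Let Γ > 0 be a real number, B ∈ ℝ^{n×m}, and let e : ℝ → ℝ^n, θ̃ : ℝ → ℝ^{n×m}, x̄ : ℝ → ℝ^n be differentiable functions such that e(t) ≠ 0 for all t and, for all t, e'(t) = A e(t) + B θ̃(t)ᵀ x̄(t) and θ̃'(t) = −Γ · (x̄(t) · (e(t)ᵀ P B)) / (2 √(e(t)ᵀ P e(t))), where x̄(t) · (e(t)ᵀ P B) denotes the outer product of the column vector x̄(t) ∈ ℝ^n with the row vector e(t)ᵀPB ∈ ℝ^{1×m}. Then the function V(t) = √(e(t)ᵀ P e(t)) + Γ⁻¹‖θ̃(t)‖_F² is differentiable and satisfies, for every t, V'(t) ≤ −(1/2) · e(t)ᵀ Q e(t) / √(e(t)ᵀ P e(t)) ≤ 0. -/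

import Mathlib

open Matrix

attribute [local instance] Matrix.normedAddCommGroup Matrix.normedSpace

/-!
Write `r = √(eᵀPe)`. Differentiating the first term of `V` gives `eᵀP(Ae + Bθ̃ᵀx̄) / r`, where the
parameter error enters through `eᵀPBθ̃ᵀx̄ / r`. The update law is `-(Γ/2)` times the gradient of
this term in `θ̃`, which is linear in `θ̃`, so `Γ⁻¹‖θ̃‖_F²` contributes exactly its negative.
Hence `V' = eᵀ(AᵀP + PA)e / (2r)`, to which the Lyapunov inequality applies.
-/

section BilinearForms

variable {ι R : Type*} [Fintype ι] [CommSemiring R]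

theorem dotProduct_mulVec_comm_of_isSymm {P : Matrix ι ι R} (hP : P.IsSymm) (x y : ι → R) :
    x ⬝ᵥ P *ᵥ y = y ⬝ᵥ P *ᵥ x := by
  rw [← dotProduct_transpose_mulVec, hP.eq]

theorem dotProduct_transpose_mul_add_mul_mulVec_self {P : Matrix ι ι R} (hP : P.IsSymm)
    (A : Matrix ι ι R) (x : ι → R) :
    x ⬝ᵥ (Aᵀ * P + P * A) *ᵥ x = 2 * (x ⬝ᵥ P *ᵥ A *ᵥ x) := by
  have transpose_term : x ⬝ᵥ (Aᵀ * P) *ᵥ x = x ⬝ᵥ P *ᵥ A *ᵥ x := by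
    rw [← dotProduct_transpose_mulVec, transpose_mul, transpose_transpose, hP.eq, mulVec_mulVec]
  rw [add_mulVec, dotProduct_add, transpose_term, ← mulVec_mulVec, two_mul]

end BilinearForms

section Derivatives

variable {ι κ 𝕜 𝔸 : Type*} [Fintype ι] [NontriviallyNormedField 𝕜] {t : 𝕜}

theorem hasDerivAt_dotProduct [NormedRing 𝔸] [NormedAlgebra 𝕜 𝔸] {u v : 𝕜 → ι → 𝔸}
    {u' v' : ι → 𝔸} (hu : HasDerivAt u u' t) (hv : HasDerivAt v v' t) :
    HasDerivAt (fun s => u s ⬝ᵥ v s) (u' ⬝ᵥ v t + u t ⬝ᵥ v') t := by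
  simp only [dotProduct, ← Finset.sum_add_distrib]
  exact .fun_sum fun i _ => (hasDerivAt_pi.mp hu i).mul (hasDerivAt_pi.mp hv i)

theorem hasDerivAt_const_mulVec [Finite κ] [NormedRing 𝔸] [NormedAlgebra 𝕜 𝔸]
    (M : Matrix κ ι 𝔸) {u : 𝕜 → ι → 𝔸} {u' : ι → 𝔸} (hu : HasDerivAt u u' t) :
    HasDerivAt (fun s => M *ᵥ u s) (M *ᵥ u') t := by
  have := Fintype.ofFinite κ
  exact hasDerivAt_pi.mpr fun i => .fun_sum fun j _ => (hasDerivAt_pi.mp hu j).const_mul (M i j)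

theorem hasDerivAt_dotProduct_mulVec_self [NormedCommRing 𝔸] [NormedAlgebra 𝕜 𝔸]
    {P : Matrix ι ι 𝔸} (hP : P.IsSymm) {u : 𝕜 → ι → 𝔸} {u' : ι → 𝔸} (hu : HasDerivAt u u' t) :
    HasDerivAt (fun s => u s ⬝ᵥ P *ᵥ u s) (2 * (u t ⬝ᵥ P *ᵥ u')) t := by
  refine (hasDerivAt_dotProduct hu (hasDerivAt_const_mulVec P hu)).congr_deriv ?_
  rw [dotProduct_mulVec_comm_of_isSymm hP u', two_mul]

theorem hasDerivAt_sum_sq_entries [Fintype κ] [NormedCommRing 𝔸] [NormedAlgebra 𝕜 𝔸]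
    {M : 𝕜 → Matrix ι κ 𝔸} {M' : Matrix ι κ 𝔸} (hM : HasDerivAt M M' t) :
    HasDerivAt (fun s => ∑ i, ∑ j, M s i j ^ 2) (2 * trace ((M t)ᵀ * M')) t := by
  have entry (i : ι) (j : κ) : HasDerivAt (fun s => M s i j) (M' i j) t :=
    hasDerivAt_pi.mp (hasDerivAt_pi.mp hM i) j
  have sum_deriv : 2 * trace ((M t)ᵀ * M') = ∑ i, ∑ j, 2 * M t i j * M' i j := by
    simp only [trace, diag_apply, mul_apply, transpose_apply, Finset.mul_sum, mul_assoc]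
    exact Finset.sum_comm
  rw [sum_deriv]
  exact .fun_sum fun i _ => .fun_sum fun j _ => by simpa using (entry i j).fun_pow 2

end Derivatives

section AdaptiveSubsystem

variable {ι κ ρ : Type*} [Fintype ι] [Fintype κ] [Fintype ρ]

/-- The Lyapunov-type function `V(e, θ̃) = √(eᵀPe) + Γ⁻¹‖θ̃‖_F²`. The Frobenius norm is written
entrywise because the norm instance on matrices in this file is the sup norm. -/
noncomputable def lyapunovFunction (P : Matrix ι ι ℝ) (Γ : ℝ) (e : ι → ℝ) (θ : Matrix ρ κ ℝ) : ℝ :=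
  √(e ⬝ᵥ P *ᵥ e) + Γ⁻¹ * ∑ i, ∑ j, θ i j ^ 2

/-- The right-hand side `-Γ x̄ (eᵀPB) / (2√(eᵀPe))` of the adaptive update law for `θ̃`. The
regressor `x̄` may have a dimension different from that of `e`. -/
noncomputable def adaptiveUpdate (P : Matrix ι ι ℝ) (Γ : ℝ) (B : Matrix ι κ ℝ) (e : ι → ℝ)
    (x : ρ → ℝ) : Matrix ρ κ ℝ :=
  (-Γ / (2 * √(e ⬝ᵥ P *ᵥ e))) • vecMulVec x (e ᵥ* P ᵥ* B)

theorem two_mul_trace_transpose_mul_adaptiveUpdate (P : Matrix ι ι ℝ) (Γ : ℝ)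
    (B : Matrix ι κ ℝ) (e : ι → ℝ) (θ : Matrix ρ κ ℝ) (x : ρ → ℝ) :
    2 * trace (θᵀ * adaptiveUpdate P Γ B e x) =
      -Γ * ((e ⬝ᵥ P *ᵥ B *ᵥ θᵀ *ᵥ x) / √(e ⬝ᵥ P *ᵥ e)) := by
  have trace_outer : trace (θᵀ * vecMulVec x (e ᵥ* P ᵥ* B)) = e ⬝ᵥ P *ᵥ B *ᵥ θᵀ *ᵥ x := by
    rw [mul_vecMulVec, trace_vecMulVec, dotProduct_comm, ← dotProduct_mulVec, ← dotProduct_mulVec]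
  rw [adaptiveUpdate, Matrix.mul_smul, trace_smul, trace_outer, smul_eq_mul]
  ring

variable {P : Matrix ι ι ℝ} {Γ t : ℝ} {e : ℝ → ι → ℝ} {θ : ℝ → Matrix ρ κ ℝ}

theorem hasDerivAt_lyapunovFunction (hP : P.IsSymm) (hpos : e t ⬝ᵥ P *ᵥ e t ≠ 0) {e' : ι → ℝ}
    {θ' : Matrix ρ κ ℝ} (he : HasDerivAt e e' t) (hθ : HasDerivAt θ θ' t) :
    HasDerivAt (fun s => lyapunovFunction P Γ (e s) (θ s))
      ((e t ⬝ᵥ P *ᵥ e') / √(e t ⬝ᵥ P *ᵥ e t) + Γ⁻¹ * (2 * trace ((θ t)ᵀ * θ'))) t := by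
  have sqrt_term := (hasDerivAt_dotProduct_mulVec_self hP he).sqrt hpos
  rw [mul_div_mul_left _ _ two_ne_zero] at sqrt_term
  exact sqrt_term.add ((hasDerivAt_sum_sq_entries hθ).const_mul Γ⁻¹)

variable {A : Matrix ι ι ℝ} {B : Matrix ι κ ℝ} {x : ρ → ℝ}

theorem hasDerivAt_lyapunovFunction_of_adaptiveUpdate (hP : P.IsSymm) (hΓ : Γ ≠ 0)
    (hpos : e t ⬝ᵥ P *ᵥ e t ≠ 0) (he : HasDerivAt e (A *ᵥ e t + B *ᵥ (θ t)ᵀ *ᵥ x) t)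
    (hθ : HasDerivAt θ (adaptiveUpdate P Γ B (e t) x) t) :
    HasDerivAt (fun s => lyapunovFunction P Γ (e s) (θ s))
      (1 / 2 * (e t ⬝ᵥ (Aᵀ * P + P * A) *ᵥ e t) / √(e t ⬝ᵥ P *ᵥ e t)) t := by
  refine (hasDerivAt_lyapunovFunction hP hpos he hθ).congr_deriv ?_
  rw [two_mul_trace_transpose_mul_adaptiveUpdate, dotProduct_transpose_mul_add_mul_mulVec_self hP,
    mulVec_add, dotProduct_add, add_div, neg_mul, mul_neg, inv_mul_cancel_left₀ hΓ,
    add_neg_cancel_right]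
  ring

theorem stmt_0_general {Q : Matrix ι ι ℝ} (hP : P.IsSymm) (hpos : 0 < e t ⬝ᵥ P *ᵥ e t)
    (hQ : 0 ≤ e t ⬝ᵥ Q *ᵥ e t) (hLyap : e t ⬝ᵥ (Aᵀ * P + P * A + Q) *ᵥ e t ≤ 0) (hΓ : Γ ≠ 0)
    (he : HasDerivAt e (A *ᵥ e t + B *ᵥ (θ t)ᵀ *ᵥ x) t)
    (hθ : HasDerivAt θ (adaptiveUpdate P Γ B (e t) x) t) :
    DifferentiableAt ℝ (fun s => lyapunovFunction P Γ (e s) (θ s)) t ∧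
      deriv (fun s => lyapunovFunction P Γ (e s) (θ s)) t ≤
        -(1 / 2) * (e t ⬝ᵥ Q *ᵥ e t) / √(e t ⬝ᵥ P *ᵥ e t) ∧
      -(1 / 2) * (e t ⬝ᵥ Q *ᵥ e t) / √(e t ⬝ᵥ P *ᵥ e t) ≤ 0 := by
  have hV := hasDerivAt_lyapunovFunction_of_adaptiveUpdate hP hΓ hpos.ne' he hθ
  rw [add_mulVec, dotProduct_add] at hLyap
  refine ⟨hV.differentiableAt, ?_, ?_⟩
  · rw [hV.deriv]
    gcongr ?_ / _
    linarith
  · exact div_nonpos_of_nonpos_of_nonneg (by linarith) (Real.sqrt_nonneg _)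

end AdaptiveSubsystem

/-- Proposition 1: the decoupled adaptive subsystem's Lyapunov-type function
`V(t) = √(e(t)ᵀ P e(t)) + Γ⁻¹‖θ̃(t)‖_F²` is differentiable with
`V'(t) ≤ -(1/2) eᵀQe / √(eᵀPe) ≤ 0` under the adaptive update law. -/
theorem stmt_0 (n m : ℕ) (hn : 1 ≤ n) (hm : 1 ≤ m)
    (A P Q : Matrix (Fin n) (Fin n) ℝ)
    (hPsymm : P.IsSymm)
    (hPpos : ∀ x : Fin n → ℝ, x ≠ 0 → 0 < x ⬝ᵥ P.mulVec x)
    (hQsymm : Q.IsSymm)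
    (hQpos : ∀ x : Fin n → ℝ, x ≠ 0 → 0 < x ⬝ᵥ Q.mulVec x)
    (hLyap : ∀ x : Fin n → ℝ, x ⬝ᵥ (Aᵀ * P + P * A + Q).mulVec x ≤ 0)
    (Γ : ℝ) (hΓ : 0 < Γ)
    (B : Matrix (Fin n) (Fin m) ℝ)
    (e : ℝ → Fin n → ℝ) (θ : ℝ → Matrix (Fin n) (Fin m) ℝ) (xb : ℝ → Fin n → ℝ)
    (hxb : Differentiable ℝ xb)
    (he0 : ∀ t, e t ≠ 0)
    (hde : ∀ t, HasDerivAt e (A.mulVec (e t) + B.mulVec ((θ t)ᵀ.mulVec (xb t))) t)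
    (hdθ : ∀ t, HasDerivAt θ
        ((-Γ / (2 * Real.sqrt (e t ⬝ᵥ P.mulVec (e t)))) •
          vecMulVec (xb t) (vecMul (vecMul (e t) P) B)) t) :
    Differentiable ℝ
      (fun t => Real.sqrt (e t ⬝ᵥ P.mulVec (e t)) + Γ⁻¹ * ∑ i, ∑ j, (θ t i j) ^ 2) ∧
    ∀ t,
      deriv (fun t => Real.sqrt (e t ⬝ᵥ P.mulVec (e t)) + Γ⁻¹ * ∑ i, ∑ j, (θ t i j) ^ 2) t ≤
          -(1 / 2) * (e t ⬝ᵥ Q.mulVec (e t)) / Real.sqrt (e t ⬝ᵥ P.mulVec (e t)) ∧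
      -(1 / 2) * (e t ⬝ᵥ Q.mulVec (e t)) / Real.sqrt (e t ⬝ᵥ P.mulVec (e t)) ≤ 0 := by
  have decrease (t : ℝ) := stmt_0_general hPsymm (hPpos _ (he0 t)) (hQpos _ (he0 t)).le
    (hLyap (e t)) hΓ.ne' (hde t) (hdθ t)
  exact ⟨fun t => (decrease t).1, fun t => (decrease t).2⟩
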